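/- Let a, b, N ≥ 0 be integers. Then in ℚ(q) one has P(2(N+b), a) · P(2N, b) = [a+b choose a] · P(2N, a+b). -/

import Mathlib

open scoped BigOperators

noncomputable section

/-- The field ℚ(q). -/
abbrev K : Type := RatFunc ℚ

/-- The variable q. -/
def qq : K := RatFunc.X

/-- The quantum integer [n] = 1 + q + ⋯ + q^{n-1}. -/
def qint (n : ℕ) : K := ∑ i ∈ Finset.range n, qq ^ i

/-- The quantum factorial [n]! = [1][2]⋯[n]. -/
def qfact (n : ℕ) : K := ∏ i ∈ Finset.range n, qint (i + 1)

/-- The Gaussian binomial coefficient [n choose k] = [n]!/([k]!·[n-k]!),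
with the convention that it is 0 when k > n. -/
def qbinom (n k : ℕ) : K :=
  if k ≤ n then qfact n / (qfact k * qfact (n - k)) else 0

/-- a_{(2m-1,N)} = [N+2m]/[2m] and a_{(2m,N)} = [2N+2m]/[N+2m]:
for odd j = 2m-1 this is [N+j+1]/[j+1], for even j = 2m this is [2N+j]/[N+j]. -/
def aB (j N : ℕ) : K :=
  if Odd j then qint (N + j + 1) / qint (j + 1) else qint (2 * N + j) / qint (N + j)

/-- P(M,N) = ∏_{i=1}^{N}(1+q^i) · ∏_{j=1}^{M} a_{(j,N)}. -/
def P (M N : ℕ) : K :=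
  (∏ i ∈ Finset.range N, (1 + qq ^ (i + 1))) * ∏ j ∈ Finset.range M, aB (j + 1) N

/-!
The identity `1 + q ^ i = [2i] / [i]` turns the first product in `P` into `[2n]!! / [n]!`, where
`[2n]!! = [2][4]⋯[2n]`. In the second product, the numerator of `a_{(2m-1,n)}` cancels the
denominator of `a_{(2m,n)}`, leaving `[2n + 2m] / [2m]`. Hence
`P(2N, n) = [2(N + n)]!! / ([n]! [2N]!!)`, and both sides of the identity telescope to
`[2(N + a + b)]!! / ([a]! [b]! [2N]!!)`.
-/

open Finset

lemma ratFunc_geom_sum_X_ne_zero (R : Type*) [CommRing R] [IsDomain R] {n : ℕ} (hn : n ≠ 0) :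
    ∑ i ∈ range n, (RatFunc.X : RatFunc R) ^ i ≠ 0 := by
  have hpoly : ∑ i ∈ range n, (Polynomial.X : Polynomial R) ^ i ≠ 0 :=
    (Polynomial.monic_geom_sum_X hn).ne_zero
  simpa using RatFunc.algebraMap_ne_zero hpoly

lemma qint_ne_zero {n : ℕ} (hn : n ≠ 0) : qint n ≠ 0 :=
  ratFunc_geom_sum_X_ne_zero ℚ hn

lemma qfact_ne_zero (n : ℕ) : qfact n ≠ 0 :=
  prod_ne_zero_iff.2 fun i _ ↦ qint_ne_zero i.succ_ne_zero

lemma qint_add (m n : ℕ) : qint (m + n) = qint m + qq ^ m * qint n := by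
  simp only [qint, sum_range_add, pow_add, mul_sum]

lemma qint_two_mul (n : ℕ) : qint (2 * n) = (1 + qq ^ n) * qint n := by
  rw [two_mul, qint_add]
  ring

/-- The quantum double factorial of an even number, `[2n]!! = [2][4]⋯[2n]`. The argument is the
number `n` of factors. -/
def qevenDoubleFact (n : ℕ) : K := ∏ i ∈ range n, qint (2 * (i + 1))

lemma qevenDoubleFact_ne_zero (n : ℕ) : qevenDoubleFact n ≠ 0 :=
  prod_ne_zero_iff.2 fun _ _ ↦ qint_ne_zero (by lia)

lemma qevenDoubleFact_zero : qevenDoubleFact 0 = 1 :=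
  prod_range_zero _

lemma qevenDoubleFact_succ (n : ℕ) :
    qevenDoubleFact (n + 1) = qevenDoubleFact n * qint (2 * (n + 1)) :=
  prod_range_succ _ n

lemma prod_one_add_qq_pow (n : ℕ) :
    ∏ i ∈ range n, (1 + qq ^ (i + 1)) = qevenDoubleFact n / qfact n := by
  rw [eq_div_iff (qfact_ne_zero n), qfact, ← prod_mul_distrib]
  exact prod_congr rfl fun i _ ↦ (qint_two_mul (i + 1)).symm

lemma aB_odd_mul_aB_even (m n : ℕ) :
    aB (2 * m + 1) n * aB (2 * m + 2) n = qint (2 * (m + n + 1)) / qint (2 * (m + 1)) := by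
  have hodd : aB (2 * m + 1) n = qint (n + (2 * m + 2)) / qint (2 * (m + 1)) :=
    if_pos (odd_two_mul_add_one m)
  have heven : aB (2 * m + 2) n = qint (2 * n + (2 * m + 2)) / qint (n + (2 * m + 2)) :=
    if_neg (Nat.not_odd_iff_even.2 (even_two_mul (m + 1)))
  rw [hodd, heven, mul_comm, div_mul_div_cancel₀ (qint_ne_zero (by lia))]
  congr 2
  ring

lemma prod_range_two_mul_aB (m n : ℕ) :
    ∏ j ∈ range (2 * m), aB (j + 1) n =
      qevenDoubleFact (m + n) / (qevenDoubleFact m * qevenDoubleFact n) := by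
  induction m with
  | zero =>
    simp [qevenDoubleFact_zero, qevenDoubleFact_ne_zero]
  | succ m ih =>
    rw [Nat.mul_succ, prod_range_succ, prod_range_succ, mul_assoc, ih, aB_odd_mul_aB_even,
      Nat.add_right_comm m 1 n, qevenDoubleFact_succ, qevenDoubleFact_succ, div_mul_div_comm,
      mul_right_comm (qevenDoubleFact m)]

lemma P_two_mul (m n : ℕ) :
    P (2 * m) n = qevenDoubleFact (m + n) / (qfact n * qevenDoubleFact m) := by
  have hn := qevenDoubleFact_ne_zero n
  rw [P, prod_one_add_qq_pow, prod_range_two_mul_aB]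
  field_simp

lemma qbinom_add_left (a b : ℕ) : qbinom (a + b) a = qfact (a + b) / (qfact a * qfact b) := by
  rw [qbinom, if_pos (Nat.le_add_right a b), Nat.add_sub_cancel_left]

theorem stmt_5 (a b N : ℕ) :
    P (2 * (N + b)) a * P (2 * N) b = qbinom (a + b) a * P (2 * N) (a + b) := by
  have hNb := qevenDoubleFact_ne_zero (N + b)
  have hab := qfact_ne_zero (a + b)
  rw [P_two_mul, P_two_mul, P_two_mul, qbinom_add_left, show N + b + a = N + (a + b) by ring]
  field_simp
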